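/- Assume the loss has the form ℓ(w,x,y) = ℓ(f_w(x),y) with values in [0,1]. Then the standard expected generalization error gen = E[(1/n) Σ_{i=1}^n (ℓ(W,Z_i^{−U_i}) − ℓ(W,Z_i^{U_i}))] satisfies |gen| ≤ E_{Y'~P_Y}[E_{Z_{[2n]}}[(1/n^{Y'}) Σ_{i=1}^n sqrt(2·max(𝟙{Y_i^-=Y'}, 𝟙{Y_i^+=Y'})·I_{Z_{[2n]}}(L_i^±;U_i))]]. -/

import Mathlib

open MeasureTheory ProbabilityTheory
open scoped ENNReal

noncomputable section

open Classical in
/-- Kullback–Leibler divergence: `∞` unless `μ ≪ ν` and the log-likelihood ratio is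
`μ`-integrable. -/
def KL {α : Type*} [MeasurableSpace α] (μ ν : Measure α) : ℝ≥0∞ :=
  if μ ≪ ν ∧ Integrable (llr μ ν) μ then ENNReal.ofReal (∫ x, llr μ ν x ∂μ) else ∞

/-- Fair coin measure on `Bool` (the law of a uniform `{−1,+1}` selector, `true ↔ +1`). -/
def coin : Measure Bool :=
  (2 : ℝ≥0∞)⁻¹ • Measure.dirac true + (2 : ℝ≥0∞)⁻¹ • Measure.dirac false

/-- Disintegrated conditional mutual information `I_z(A;B)` given `Z = z`, defined through
regular conditional distributions: `KL(P_{A,B|Z=z} ‖ P_{A|Z=z} ⊗ P_{B|Z=z})`. -/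
def dCMI {Ω γ α β : Type*} [MeasurableSpace Ω] [MeasurableSpace γ]
    [MeasurableSpace α] [StandardBorelSpace α] [Nonempty α]
    [MeasurableSpace β] [StandardBorelSpace β] [Nonempty β]
    (μ : Measure Ω) [IsFiniteMeasure μ]
    (A : Ω → α) (B : Ω → β) (Z : Ω → γ) (z : γ) : ℝ≥0∞ :=
  KL (condDistrib (fun ω => (A ω, B ω)) Z μ z)
    ((condDistrib A Z μ z).prod (condDistrib B Z μ z))

/-- The super-sample entry selected by `u`, i.e. `z^{u}` (the training sample):
`zz = (z⁻, z⁺)` and `u = true` means `+1`. -/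
def trainSel {𝒵 : Type*} (zz : 𝒵 × 𝒵) (u : Bool) : 𝒵 := if u then zz.2 else zz.1

/-- The super-sample entry not selected by `u`, i.e. `z^{−u}` (the test sample). -/
def testSel {𝒵 : Type*} (zz : 𝒵 × 𝒵) (u : Bool) : 𝒵 := if u then zz.1 else zz.2

/-
Given the super-sample, the selector `U_i` is still a fair coin, so under the product of the
conditional laws of the losses `L_i^±` and of `U_i` the gap between test and training loss is a
bounded variable times a centred sign, hence `1`-sub-Gaussian. The Donsker–Varadhan inequality then
bounds its conditional mean under the joint law by `√(2 I_z(L_i^±; U_i))`. The average over the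
super-sample splits according to the label `Y_i^-`: restricting to `Y_i^- = y` costs the factor
`1 / P(Y = y)`, and the indicator of `Y_i^- = y` is at most the maximum of the two indicators.
-/

open scoped NNReal

section Transportation

variable {α : Type*} [MeasurableSpace α] {P Q : Measure α} [IsProbabilityMeasure P]
  [SigmaFinite Q] {f : α → ℝ}

-- Gibbs' inequality for `P` against the exponential tilt `exp f · Q`.
lemma integral_le_integral_llr_add_log_integral_exp (hPQ : P ≪ Q)
    (hllr : Integrable (llr P Q) P) (hfP : Integrable f P)
    (hfQ : Integrable (fun x => Real.exp (f x)) Q) :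
    ∫ x, f x ∂P ≤ ∫ x, llr P Q x ∂P + Real.log (∫ x, Real.exp (f x) ∂Q) := by
  have : NeZero Q := ⟨by rintro rfl; exact IsProbabilityMeasure.ne_zero P (by simpa using hPQ)⟩
  have : IsProbabilityMeasure (Q.tilted f) := isProbabilityMeasure_tilted hfQ
  have gibbs := InformationTheory.integral_llr_add_sub_measure_univ_nonneg
    (hPQ.trans (absolutelyContinuous_tilted hfQ)) (integrable_llr_tilted_right hPQ hfP hllr hfQ)
  rw [integral_llr_tilted_right hPQ hfP hfQ hllr, probReal_univ, probReal_univ] at gibbs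
  linarith

-- The variational bound for `t • f` is a quadratic in `t`; the claim is its discriminant
-- condition.
lemma sq_integral_le_of_hasSubgaussianMGF {c : ℝ≥0} (hPQ : P ≪ Q)
    (hllr : Integrable (llr P Q) P) (hfP : Integrable f P) (hfQ : HasSubgaussianMGF f c Q) :
    (∫ x, f x ∂P) ^ 2 ≤ 2 * c * ∫ x, llr P Q x ∂P := by
  have quadratic_nonneg (t : ℝ) :
      0 ≤ (c / 2 : ℝ) * (t * t) + (-∫ x, f x ∂P) * t + ∫ x, llr P Q x ∂P := by
    have variational := integral_le_integral_llr_add_log_integral_exp hPQ hllr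
      (hfP.const_mul t) (hfQ.integrable_exp_mul t)
    have cgf_le : Real.log (∫ x, Real.exp (t * f x) ∂Q) ≤ c * t ^ 2 / 2 := hfQ.cgf_le t
    rw [integral_const_mul] at variational
    linarith
  have := discrim_le_zero quadratic_nonneg
  rw [discrim] at this
  linarith

lemma enorm_integral_le_rpow_KL_of_hasSubgaussianMGF {c : ℝ≥0} (hc : c ≠ 0)
    (hfP : Integrable f P) (hfQ : HasSubgaussianMGF f c Q) :
    ‖∫ x, f x ∂P‖ₑ ≤ (2 * c * KL P Q) ^ (1 / 2 : ℝ) := by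
  unfold KL
  split_ifs with h
  · have hsq := sq_integral_le_of_hasSubgaussianMGF h.1 h.2 hfP hfQ
    calc ‖∫ x, f x ∂P‖ₑ
        ≤ ENNReal.ofReal √(2 * c * ∫ x, llr P Q x ∂P) := by
          rw [Real.enorm_eq_ofReal_abs]
          exact ENNReal.ofReal_le_ofReal (Real.abs_le_sqrt hsq)
      _ = (2 * c * ENNReal.ofReal (∫ x, llr P Q x ∂P)) ^ (1 / 2 : ℝ) := by
          rw [Real.sqrt_eq_rpow, ← ENNReal.ofReal_rpow_of_nonneg ((sq_nonneg _).trans hsq)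
            (by norm_num), ENNReal.ofReal_mul (by positivity), ENNReal.ofReal_mul (by norm_num)]
          simp
  · simp [ENNReal.mul_top, hc]

end Transportation

section Coin

instance isProbabilityMeasure_coin : IsProbabilityMeasure coin :=
  ⟨by simp [coin, ENNReal.inv_two_add_inv_two]⟩

/-- The value in `{−1,+1}` encoded by a selector, as a real number. -/
def selSign (u : Bool) : ℝ := if u then 1 else -1

lemma abs_selSign (u : Bool) : |selSign u| = 1 := by
  cases u <;> simp [selSign]

lemma apply_testSel {α β : Type*} (g : α → β) (a : α × α) (u : Bool) :
    g (testSel a u) = testSel (g a.1, g a.2) u :=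
  apply_ite g _ _ _

lemma apply_trainSel {α β : Type*} (g : α → β) (a : α × α) (u : Bool) :
    g (trainSel a u) = trainSel (g a.1, g a.2) u :=
  apply_ite g _ _ _

lemma testSel_sub_trainSel (a : ℝ × ℝ) (u : Bool) :
    testSel a u - trainSel a u = selSign u * (a.1 - a.2) := by
  cases u <;> simp [testSel, trainSel, selSign]

lemma integral_selSign_coin : ∫ u, selSign u ∂coin = 0 := by
  have integrable (b : Bool) : Integrable selSign ((2 : ℝ≥0∞)⁻¹ • Measure.dirac b) :=
    (integrable_dirac (by simp)).smul_measure (by simp)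
  rw [coin, integral_add_measure (integrable _) (integrable _)]
  simp [selSign]

lemma hasSubgaussianMGF_selSign_mul {α : Type*} [MeasurableSpace α] {Q : Measure α}
    [IsProbabilityMeasure Q] {φ : α → ℝ} (hφ : AEMeasurable φ Q) (hφ1 : ∀ᵐ a ∂Q, |φ a| ≤ 1) :
    HasSubgaussianMGF (fun p : α × Bool => selSign p.2 * φ p.1) 1 (Q.prod coin) := by
  have mean_zero : ∫ p, selSign p.2 * φ p.1 ∂(Q.prod coin) = 0 := by
    simp_rw [mul_comm (selSign _)]
    rw [integral_prod_mul, integral_selSign_coin, mul_zero]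
  have mem_Icc : ∀ᵐ p ∂(Q.prod coin), selSign p.2 * φ p.1 ∈ Set.Icc (-1 : ℝ) 1 := by
    filter_upwards [Measure.quasiMeasurePreserving_fst.ae hφ1] with p hp
    rwa [Set.mem_Icc, ← abs_le, abs_mul, abs_selSign, one_mul]
  have measurable : AEMeasurable (fun p : α × Bool => selSign p.2 * φ p.1) (Q.prod coin) :=
    ((measurable_of_countable selSign).comp measurable_snd).aemeasurable.mul hφ.comp_fst
  convert hasSubgaussianMGF_of_mem_Icc_of_integral_eq_zero measurable mem_Icc mean_zero
  ext
  norm_num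

end Coin

lemma indepFun_and_map_eq_of_map_prodMk_eq_prod {Ω α β : Type*} [MeasurableSpace Ω]
    [MeasurableSpace α] [MeasurableSpace β] {μ : Measure Ω} [IsFiniteMeasure μ] {X : Ω → α}
    {Y : Ω → β} {P : Measure α} {Q : Measure β} [IsProbabilityMeasure P] [IsProbabilityMeasure Q]
    (hX : Measurable X) (hY : Measurable Y) (h : μ.map (fun ω => (X ω, Y ω)) = P.prod Q) :
    IndepFun X Y μ ∧ μ.map X = P ∧ μ.map Y = Q := by
  have hP : μ.map X = P := by rw [← Measure.fst_map_prodMk hY, h, Measure.fst_prod]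
  have hQ : μ.map Y = Q := by rw [← Measure.snd_map_prodMk hX, h, Measure.snd_prod]
  refine ⟨?_, hP, hQ⟩
  rw [indepFun_iff_map_prod_eq_prod_map_map hX.aemeasurable hY.aemeasurable, h, hP, hQ]

section CondDistrib

variable {Ω γ β : Type*} [MeasurableSpace Ω] [MeasurableSpace γ] [MeasurableSpace β]
  [StandardBorelSpace β] [Nonempty β] {μ : Measure Ω} [IsFiniteMeasure μ] {Y : Ω → β} {Z : Ω → γ}

lemma condDistrib_ae_eq_const_of_indepFun (hZ : AEMeasurable Z μ) (hY : AEMeasurable Y μ)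
    (h : IndepFun Z Y μ) : condDistrib Y Z μ =ᵐ[μ.map Z] Kernel.const γ (μ.map Y) := by
  refine condDistrib_ae_eq_of_measure_eq_compProd Z hY ?_
  rw [Measure.compProd_const, (indepFun_iff_map_prod_eq_prod_map_map hZ hY).1 h]

lemma ae_ae_condDistrib_of_ae (hZ : AEMeasurable Z μ) (hY : AEMeasurable Y μ) {p : β → Prop}
    (hp : MeasurableSet {y | p y}) (h : ∀ᵐ ω ∂μ, p (Y ω)) :
    ∀ᵐ z ∂μ.map Z, ∀ᵐ y ∂condDistrib Y Z μ z, p y := by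
  apply Measure.ae_ae_of_ae_comp
  rwa [condDistrib_comp_map hZ hY, ae_map_iff hY hp]

lemma enorm_integral_le_lintegral_enorm_integral_condDistrib (hZ : AEMeasurable Z μ)
    (hY : AEMeasurable Y μ) {f : β → ℝ} (hf : Integrable f (μ.map Y)) :
    ‖∫ ω, f (Y ω) ∂μ‖ₑ ≤ ∫⁻ z, ‖∫ y, f y ∂condDistrib Y Z μ z‖ₑ ∂μ.map Z := by
  have disintegration :
      ∫ ω, f (Y ω) ∂μ = ∫ z, ∫ y, f y ∂condDistrib Y Z μ z ∂μ.map Z := by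
    rw [← integral_map hY hf.aestronglyMeasurable]
    rw [← condDistrib_comp_map hZ hY, Measure.comp_eq_comp_const_apply] at hf ⊢
    rw [Kernel.integral_comp hf, Kernel.const_apply]
  rw [disintegration]
  exact enorm_integral_le_lintegral_enorm _

end CondDistrib

section SelectorGap

variable {Ω γ : Type*} [MeasurableSpace Ω] [MeasurableSpace γ] {μ : Measure Ω}
  [IsFiniteMeasure μ] {V : Ω → Bool} {Z : Ω → γ}

lemma enorm_integral_selSign_mul_le_lintegral_dCMI {α : Type*} [MeasurableSpace α]
    [StandardBorelSpace α] [Nonempty α] {A : Ω → α} (hA : Measurable A)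
    (hV : Measurable V) (hZ : AEMeasurable Z μ)
    (hcoin : condDistrib V Z μ =ᵐ[μ.map Z] Kernel.const γ coin)
    {φ : α → ℝ} (hφ : Measurable φ) (hφ1 : ∀ᵐ ω ∂μ, |φ (A ω)| ≤ 1) :
    ‖∫ ω, selSign (V ω) * φ (A ω) ∂μ‖ₑ ≤
      ∫⁻ z, (2 * dCMI μ A V Z z) ^ (1 / 2 : ℝ) ∂μ.map Z := by
  have hAV : AEMeasurable (fun ω => (A ω, V ω)) μ := (hA.prodMk hV).aemeasurable
  let F : α × Bool → ℝ := fun p => selSign p.2 * φ p.1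
  have hF : Measurable F :=
    ((measurable_of_countable selSign).comp measurable_snd).mul (hφ.comp measurable_fst)
  have integrable_F : Integrable F (μ.map fun ω => (A ω, V ω)) := by
    rw [integrable_map_measure hF.aestronglyMeasurable hAV]
    refine Integrable.of_bound (hF.comp_aemeasurable hAV).aestronglyMeasurable 1 ?_
    filter_upwards [hφ1] with ω hω
    simpa [F, abs_mul, abs_selSign] using hω
  have integrable_F_condDistrib :
      ∀ᵐ z ∂μ.map Z, Integrable F (condDistrib (fun ω => (A ω, V ω)) Z μ z) := by
    rw [← condDistrib_comp_map hZ hAV] at integrable_F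
    exact Measure.ae_integrable_of_integrable_comp integrable_F
  have bounded_condDistrib := ae_ae_condDistrib_of_ae hZ hA.aemeasurable
    (measurableSet_le (by fun_prop) measurable_const : MeasurableSet {a | |φ a| ≤ 1}) hφ1
  refine (enorm_integral_le_lintegral_enorm_integral_condDistrib hZ hAV integrable_F).trans
    (lintegral_mono_ae ?_)
  filter_upwards [hcoin, integrable_F_condDistrib, bounded_condDistrib] with z hz hFz hφz
  rw [dCMI, hz, Kernel.const_apply]
  simpa using enorm_integral_le_rpow_KL_of_hasSubgaussianMGF one_ne_zero hFz
    (hasSubgaussianMGF_selSign_mul hφ.aemeasurable hφz)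

lemma enorm_integral_testSel_sub_trainSel_le_lintegral_dCMI {L : Ω → ℝ × ℝ} (hL : Measurable L)
    (hV : Measurable V) (hZ : AEMeasurable Z μ)
    (hcoin : condDistrib V Z μ =ᵐ[μ.map Z] Kernel.const γ coin)
    (hL1 : ∀ᵐ ω ∂μ, |(L ω).1 - (L ω).2| ≤ 1) :
    ‖∫ ω, (testSel (L ω) (V ω) - trainSel (L ω) (V ω)) ∂μ‖ₑ ≤
      ∫⁻ z, (2 * dCMI μ L V Z z) ^ (1 / 2 : ℝ) ∂μ.map Z := by
  simp_rw [testSel_sub_trainSel]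
  exact enorm_integral_selSign_mul_le_lintegral_dCMI hL hV hZ hcoin
    (φ := fun a => a.1 - a.2) (by fun_prop) hL1

lemma integrable_testSel_sub_trainSel {L : Ω → ℝ × ℝ} (hL : Measurable L) (hV : Measurable V)
    (hL1 : ∀ᵐ ω ∂μ, |(L ω).1 - (L ω).2| ≤ 1) :
    Integrable (fun ω => testSel (L ω) (V ω) - trainSel (L ω) (V ω)) μ := by
  simp_rw [testSel_sub_trainSel]
  refine Integrable.of_bound
    (((measurable_of_countable selSign).comp hV).mul (by fun_prop)).aestronglyMeasurable 1 ?_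
  filter_upwards [hL1] with ω hω
  simpa [abs_mul, abs_selSign] using hω

end SelectorGap

section Classwise

variable {ι γ 𝒴 : Type*} [MeasurableSpace γ] {ν : Measure γ}

lemma sum_lintegral_le_lintegral_sum (s : Finset ι) (g : ι → γ → ℝ≥0∞) :
    ∑ i ∈ s, ∫⁻ z, g i z ∂ν ≤ ∫⁻ z, ∑ i ∈ s, g i z ∂ν := by
  classical
  induction s using Finset.induction_on with
  | empty => simp
  | insert i s hi ih =>
    simp_rw [Finset.sum_insert hi]
    exact (add_le_add_right ih _).trans (le_lintegral_add _ _)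

variable [IsFiniteMeasure ν] [MeasurableSpace 𝒴] [Countable 𝒴] [MeasurableSingletonClass 𝒴]

lemma lintegral_eq_lintegral_map_lintegral_cond {k : γ → 𝒴} (hk : Measurable k) (g : γ → ℝ≥0∞) :
    ∫⁻ z, g z ∂ν = ∫⁻ y, ∫⁻ z, g z ∂ν[|k ← y] ∂ν.map k := by
  have fiber (y : 𝒴) :
      (∫⁻ z, g z ∂ν[|k ← y]) * ν.map k {y} = ∫⁻ z in k ⁻¹' {y}, g z ∂ν := by
    rw [Measure.map_apply hk (measurableSet_singleton y), ProbabilityTheory.cond,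
      lintegral_smul_measure, smul_eq_mul]
    by_cases hy : ν (k ⁻¹' {y}) = 0
    · simp [hy, Measure.restrict_eq_zero.2 hy]
    · rw [mul_right_comm, ENNReal.inv_mul_cancel hy (measure_ne_top _ _), one_mul]
  rw [lintegral_countable' (μ := ν.map k), tsum_congr fiber,
    ← lintegral_iUnion (fun y => hk (measurableSet_singleton y)) (pairwise_disjoint_fiber k),
    ← Set.preimage_iUnion, Set.iUnion_of_singleton, Set.preimage_univ, setLIntegral_univ]

-- Only an inequality because the `g i` need not be measurable.
lemma sum_lintegral_le_lintegral_classwise [Fintype ι] {P : Measure 𝒴} {k : ι → γ → 𝒴}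
    (hk : ∀ i, Measurable (k i)) (hP : ∀ i, ν.map (k i) = P) (g : ι → γ → ℝ≥0∞) :
    ∑ i, ∫⁻ z, g i z ∂ν ≤
      ∫⁻ y, (P {y})⁻¹ * ∫⁻ z, ∑ i, (k i ⁻¹' {y}).indicator (g i) z ∂ν ∂P := by
  have cond_eq (i : ι) (y : 𝒴) : ∫⁻ z, g i z ∂ν[|k i ← y] =
      (P {y})⁻¹ * ∫⁻ z, (k i ⁻¹' {y}).indicator (g i) z ∂ν := by
    have hy := hk i (measurableSet_singleton y)
    rw [ProbabilityTheory.cond, lintegral_smul_measure, smul_eq_mul, lintegral_indicator hy,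
      ← hP i, Measure.map_apply (hk i) (measurableSet_singleton y)]
  calc ∑ i, ∫⁻ z, g i z ∂ν
      = ∑ i, ∫⁻ y, (P {y})⁻¹ * ∫⁻ z, (k i ⁻¹' {y}).indicator (g i) z ∂ν ∂P := by
        refine Finset.sum_congr rfl fun i _ => ?_
        rw [lintegral_eq_lintegral_map_lintegral_cond (hk i), hP i]
        exact lintegral_congr (cond_eq i)
    _ = ∫⁻ y, (P {y})⁻¹ * ∑ i, ∫⁻ z, (k i ⁻¹' {y}).indicator (g i) z ∂ν ∂P := by
        rw [← lintegral_finsetSum _ fun _ _ => measurable_of_countable _]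
        simp_rw [Finset.mul_sum]
    _ ≤ _ := by
        gcongr
        exact sum_lintegral_le_lintegral_sum _ _

end Classwise

lemma enorm_integral_const_mul_sum_le {Ω ι : Type*} [Fintype ι] [MeasurableSpace Ω]
    {μ : Measure Ω} (c : ℝ) {d : ι → Ω → ℝ} (hd : ∀ i, Integrable (d i) μ) :
    ‖∫ ω, c * ∑ i, d i ω ∂μ‖ₑ ≤ ‖c‖ₑ * ∑ i, ‖∫ ω, d i ω ∂μ‖ₑ := by
  rw [integral_const_mul, enorm_mul, integral_finsetSum _ fun i _ => hd i]
  gcongr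
  exact enorm_sum_le _ _

lemma enorm_integral_const_mul_sum_gap_le_lintegral_classwise {Ω ι γ 𝒴 : Type*}
    [MeasurableSpace Ω] [Fintype ι] [MeasurableSpace γ] [MeasurableSpace 𝒴] [Countable 𝒴]
    [MeasurableSingletonClass 𝒴] {μ : Measure Ω} [IsFiniteMeasure μ] {Z : Ω → γ}
    {V : ι → Ω → Bool} {L : ι → Ω → ℝ × ℝ} {k : ι → γ → 𝒴} {P : Measure 𝒴} (c : ℝ)
    (hZ : AEMeasurable Z μ) (hV : ∀ i, Measurable (V i))
    (hcoin : ∀ i, condDistrib (V i) Z μ =ᵐ[μ.map Z] Kernel.const γ coin)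
    (hL : ∀ i, Measurable (L i)) (hL1 : ∀ i, ∀ᵐ ω ∂μ, |(L i ω).1 - (L i ω).2| ≤ 1)
    (hk : ∀ i, Measurable (k i)) (hP : ∀ i, (μ.map Z).map (k i) = P) :
    ‖∫ ω, c * ∑ i, (testSel (L i ω) (V i ω) - trainSel (L i ω) (V i ω)) ∂μ‖ₑ ≤
      ‖c‖ₑ * ∫⁻ y, (P {y})⁻¹ * ∫⁻ z, ∑ i, (k i ⁻¹' {y}).indicator
        (fun z => (2 * dCMI μ (L i) (V i) Z z) ^ (1 / 2 : ℝ)) z ∂μ.map Z ∂P := by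
  refine (enorm_integral_const_mul_sum_le c fun i =>
    integrable_testSel_sub_trainSel (hL i) (hV i) (hL1 i)).trans (mul_le_mul_right ?_ _)
  calc ∑ i, ‖∫ ω, (testSel (L i ω) (V i ω) - trainSel (L i ω) (V i ω)) ∂μ‖ₑ
      ≤ ∑ i, ∫⁻ z, (2 * dCMI μ (L i) (V i) Z z) ^ (1 / 2 : ℝ) ∂μ.map Z :=
        Finset.sum_le_sum fun i _ => enorm_integral_testSel_sub_trainSel_le_lintegral_dCMI
          (hL i) (hV i) hZ (hcoin i) (hL1 i)
    _ ≤ _ := sum_lintegral_le_lintegral_classwise hk hP _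

lemma ofReal_one_div_natCast_mul_toReal (n : ℕ) {p : ℝ≥0∞} (hp0 : p ≠ 0) (hp : p ≠ ∞) :
    ENNReal.ofReal (1 / (n * p.toReal)) = ‖(1 / n : ℝ)‖ₑ * p⁻¹ := by
  rw [Real.enorm_of_nonneg (by positivity), one_div, mul_inv, ← one_div,
    ENNReal.ofReal_mul (by positivity), ENNReal.ofReal_inv_of_pos (ENNReal.toReal_pos hp0 hp),
    ENNReal.ofReal_toReal hp]

lemma indicator_preimage_singleton_le_rpow_max {γ 𝒴 : Type*} [DecidableEq 𝒴] (k : γ → 𝒴)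
    (y y' : 𝒴) (D : γ → ℝ≥0∞) (z : γ) :
    (k ⁻¹' {y}).indicator (fun z => (2 * D z) ^ (1 / 2 : ℝ)) z ≤
      (2 * max (if k z = y then (1 : ℝ≥0∞) else 0) (if y' = y then (1 : ℝ≥0∞) else 0) * D z) ^
        (1 / 2 : ℝ) := by
  by_cases hz : k z = y
  · rw [Set.indicator_of_mem (show z ∈ k ⁻¹' {y} from hz), if_pos hz,
      max_eq_left (by split_ifs <;> simp), mul_one]
  · simp [Set.indicator_of_notMem (show z ∉ k ⁻¹' {y} from hz)]

theorem standard_gen_classwise_eCMI_bound_general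
    {Ω 𝒲 𝒳 𝒴 : Type*} [MeasurableSpace Ω] [MeasurableSpace 𝒲] [MeasurableSpace 𝒳]
    [MeasurableSpace 𝒴] [Countable 𝒴] [MeasurableSingletonClass 𝒴] [DecidableEq 𝒴]
    (μ : Measure Ω) [IsProbabilityMeasure μ] (n : ℕ) (hn : 0 < n) (PZ : Measure (𝒳 × 𝒴))
    (Z : Ω → Fin n → (𝒳 × 𝒴) × (𝒳 × 𝒴)) (hZ : Measurable Z)
    (hPZ : ∀ i, μ.map (fun ω => (Z ω i).1) = PZ)
    (U : Ω → Fin n → Bool) (hU : Measurable U)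
    (hUcoin : ∀ i, μ.map (fun ω => U ω i) = coin)
    (hZU : ∀ i, IndepFun Z (fun ω => U ω i) μ)
    (W : Ω → 𝒲) (hW : Measurable W)
    (ℓ : 𝒲 → 𝒳 × 𝒴 → ℝ) (hℓ : Measurable fun p : 𝒲 × (𝒳 × 𝒴) => ℓ p.1 p.2)
    (hℓ01 : ∀ w z, ℓ w z ∈ Set.Icc (0 : ℝ) 1) :
    ENNReal.ofReal
        |∫ ω, (1 / (n : ℝ)) * ∑ i, (ℓ (W ω) (testSel (Z ω i) (U ω i)) -
            ℓ (W ω) (trainSel (Z ω i) (U ω i))) ∂μ|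
      ≤ ∫⁻ y, (∫⁻ z, ENNReal.ofReal (1 / ((n : ℝ) * (PZ (Prod.snd ⁻¹' {y})).toReal)) *
            ∑ i, (2 * max (if (z i).1.2 = y then (1 : ℝ≥0∞) else 0)
                          (if (z i).2.2 = y then (1 : ℝ≥0∞) else 0) *
                  dCMI μ (fun ω => (ℓ (W ω) (Z ω i).1, ℓ (W ω) (Z ω i).2))
                    (fun ω => U ω i) Z z) ^ (1 / 2 : ℝ) ∂(μ.map Z)) ∂(PZ.map Prod.snd) := by
  have hUi (i : Fin n) : Measurable fun ω => U ω i := by fun_prop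
  let L (i : Fin n) (ω : Ω) : ℝ × ℝ := (ℓ (W ω) (Z ω i).1, ℓ (W ω) (Z ω i).2)
  have hL (i : Fin n) : Measurable (L i) :=
    (hℓ.comp (by fun_prop : Measurable fun ω => (W ω, (Z ω i).1))).prodMk
      (hℓ.comp (by fun_prop : Measurable fun ω => (W ω, (Z ω i).2)))
  have hL1 (i : Fin n) (ω : Ω) : |(L i ω).1 - (L i ω).2| ≤ 1 := by
    simpa using abs_sub_le_of_le_of_le (hℓ01 _ _).1 (hℓ01 _ _).2 (hℓ01 _ _).1 (hℓ01 _ _).2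
  have hcoin (i : Fin n) : condDistrib (fun ω => U ω i) Z μ =ᵐ[μ.map Z] Kernel.const _ coin :=
    hUcoin i ▸ condDistrib_ae_eq_const_of_indepFun hZ.aemeasurable (hUi i).aemeasurable (hZU i)
  have hlabel (i : Fin n) : (μ.map Z).map (fun z => (z i).1.2) = PZ.map Prod.snd := by
    rw [← hPZ i, Measure.map_map (by fun_prop) hZ, Measure.map_map (by fun_prop) (by fun_prop)]
    rfl
  have : IsFiniteMeasure PZ := hPZ ⟨0, hn⟩ ▸ inferInstance
  simp_rw [apply_testSel (ℓ _), apply_trainSel (ℓ _), ← Real.enorm_eq_ofReal_abs]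
  refine (enorm_integral_const_mul_sum_gap_le_lintegral_classwise (1 / n : ℝ) hZ.aemeasurable hUi
    hcoin hL (fun i => .of_forall (hL1 i)) (fun i => by fun_prop) hlabel).trans ?_
  rw [← lintegral_const_mul _ (measurable_of_countable _)]
  refine lintegral_mono_ae (ae_iff_of_countable.2 fun y hy => ?_)
  rw [Measure.map_apply measurable_snd (measurableSet_singleton y)] at hy ⊢
  rw [← mul_assoc, ← ofReal_one_div_natCast_mul_toReal n hy (measure_ne_top _ _),
    lintegral_const_mul' _ _ ENNReal.ofReal_ne_top]
  gcongr with z i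
  exact indicator_preimage_singleton_le_rpow_max _ _ _ _ _

/-- **Corollary C.4 (label-dependent e-CMI bound for the standard generalization error)**:
in the super-sample setting with predictions and a bounded loss `ℓ(f_w(x),y) ∈ [0,1]`,
the standard expected generalization error satisfies
`|gen| ≤ E_{Y'∼P_Y}[E_{Z_{[2n]}}[(1/n^{Y'}) Σ_i
    sqrt (2 max(𝟙{Y_i⁻=Y'},𝟙{Y_i⁺=Y'}) I_{Z_{[2n]}}(L_i^±;U_i))]]`,
where `L_i^± = (ℓ(f_W(X_i⁻),Y_i⁻), ℓ(f_W(X_i⁺),Y_i⁺))`. -/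
theorem standard_gen_classwise_eCMI_bound
    {Ω 𝒲 𝒳 𝒴 Yhat : Type*}
    [mΩ : MeasurableSpace Ω] [StandardBorelSpace Ω] [Nonempty Ω]
    [MeasurableSpace 𝒲] [StandardBorelSpace 𝒲] [Nonempty 𝒲]
    [MeasurableSpace 𝒳] [StandardBorelSpace 𝒳]
    [MeasurableSpace 𝒴] [Countable 𝒴] [MeasurableSingletonClass 𝒴] [DecidableEq 𝒴]
    [MeasurableSpace Yhat] [StandardBorelSpace Yhat] [Nonempty Yhat]
    (μ : Measure Ω) [IsProbabilityMeasure μ]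
    (n : ℕ) (hn : 0 < n)
    (PZ : Measure (𝒳 × 𝒴)) [IsProbabilityMeasure PZ]
    (Z : Ω → Fin n → (𝒳 × 𝒴) × (𝒳 × 𝒴)) (hZ : Measurable Z)
    (U : Ω → Fin n → Bool) (hU : Measurable U)
    (W : Ω → 𝒲) (hW : Measurable W)
    (hlaw : μ.map (fun ω => (Z ω, U ω)) =
      (Measure.pi fun _ : Fin n => PZ.prod PZ).prod (Measure.pi fun _ : Fin n => coin))
    (hSle : MeasurableSpace.comap (fun ω (i : Fin n) => trainSel (Z ω i) (U ω i))
        inferInstance ≤ mΩ)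
    (hMarkov : CondIndepFun
      (MeasurableSpace.comap (fun ω (i : Fin n) => trainSel (Z ω i) (U ω i)) inferInstance)
      hSle W (fun ω => (Z ω, U ω)) μ)
    (f : 𝒲 → 𝒳 → Yhat) (hf : Measurable fun p : 𝒲 × 𝒳 => f p.1 p.2)
    (ℓ : Yhat → 𝒴 → ℝ) (hℓ : Measurable fun p : Yhat × 𝒴 => ℓ p.1 p.2)
    (hℓ01 : ∀ p y', ℓ p y' ∈ Set.Icc (0 : ℝ) 1) :
    ENNReal.ofReal
        |∫ ω, (1 / (n : ℝ)) *
            ∑ i, (ℓ (f (W ω) (testSel (Z ω i) (U ω i)).1) (testSel (Z ω i) (U ω i)).2 -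
                  ℓ (f (W ω) (trainSel (Z ω i) (U ω i)).1) (trainSel (Z ω i) (U ω i)).2) ∂μ|
      ≤ ∫⁻ y, (∫⁻ z, ENNReal.ofReal (1 / ((n : ℝ) * (PZ (Prod.snd ⁻¹' {y})).toReal)) *
            ∑ i, (2 * max (if (z i).1.2 = y then (1 : ℝ≥0∞) else 0)
                          (if (z i).2.2 = y then (1 : ℝ≥0∞) else 0) *
                  dCMI μ (fun ω => (ℓ (f (W ω) ((Z ω i).1.1)) ((Z ω i).1.2),
                      ℓ (f (W ω) ((Z ω i).2.1)) ((Z ω i).2.2)))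
                    (fun ω => U ω i) Z z) ^ (1 / 2 : ℝ)
            ∂(μ.map Z))
          ∂(PZ.map Prod.snd) := by
  have hUi (i : Fin n) : Measurable fun u : Fin n → Bool => u i := measurable_pi_apply i
  obtain ⟨hZU, hZlaw, hUlaw⟩ := indepFun_and_map_eq_of_map_prodMk_eq_prod hZ hU hlaw
  have hPZ (i : Fin n) : μ.map (fun ω => (Z ω i).1) = PZ := by
    rw [← (measurePreserving_fst.comp (measurePreserving_eval (fun _ => PZ.prod PZ) i)).map_eq,
      ← hZlaw, Measure.map_map (by fun_prop) hZ]
    rfl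
  have hUcoin (i : Fin n) : μ.map (fun ω => U ω i) = coin := by
    rw [← (measurePreserving_eval (fun _ => coin) i).map_eq, ← hUlaw,
      Measure.map_map (hUi i) hU]
    rfl
  exact standard_gen_classwise_eCMI_bound_general μ n hn PZ Z hZ hPZ U hU hUcoin
    (fun i => hZU.comp measurable_id (hUi i)) W hW (fun w z => ℓ (f w z.1) z.2)
    (hℓ.comp ((hf.comp (by fun_prop : Measurable fun p : 𝒲 × 𝒳 × 𝒴 => (p.1, p.2.1))).prodMk
      measurable_snd.snd)) fun _ _ => hℓ01 _ _
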